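/- Let P be a centrally symmetric convex decagon (a convex polygon with exactly 10 vertices, symmetric about a point). If P admits a k-fold translative tiling of the plane for some positive integer k, then k ≥ 5; that is, τ(P) ≥ 5. -/

import Mathlib

open Pointwise

/-- `K + X` is a `k`-fold translative tiling of the plane: the translate multiset
`(x i)` is discrete, every point of the plane belongs to at least `k` of the translates
`K + x i`, and every point belongs to at most `k` of the translates `interior K + x i`
(multiplicity counted over the index set). -/
def IsKFoldTranslativeTiling {ι : Type} (K : Set (ℝ × ℝ)) (x : ι → ℝ × ℝ) (k : ℕ) : Prop :=
  (∀ R : ℝ, {i : ι | ‖x i‖ ≤ R}.Finite) ∧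
  (∀ p : ℝ × ℝ, ∃ s : Finset ι, k ≤ s.card ∧ ∀ i ∈ s, p - x i ∈ K) ∧
  (∀ p : ℝ × ℝ, ∀ s : Finset ι, (∀ i ∈ s, p - x i ∈ interior K) → s.card ≤ k)

/-- `P` is a (two-dimensional) convex polygon whose vertex set is the finite set `V`:
`P` is the convex hull of `V`, every element of `V` is an extreme point of `P`
(so `V` is exactly the vertex set), and `P` has nonempty interior. -/
def IsConvexPolygon (P : Set (ℝ × ℝ)) (V : Finset (ℝ × ℝ)) : Prop :=
  P = convexHull ℝ (V : Set (ℝ × ℝ)) ∧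
  (∀ v ∈ V, v ∈ Set.extremePoints ℝ P) ∧
  (interior P).Nonempty

/-- `P` is symmetric about some point `c`. -/
def IsCentrallySymmetric (P : Set (ℝ × ℝ)) : Prop :=
  ∃ c : ℝ × ℝ, ∀ p ∈ P, 2 • c - p ∈ P

/-- The segment `[a, b]` is an edge of the convex polygon `P` with vertex set `V`. -/
def IsEdge (P : Set (ℝ × ℝ)) (V : Finset (ℝ × ℝ)) (a b : ℝ × ℝ) : Prop :=
  a ∈ V ∧ b ∈ V ∧ a ≠ b ∧ segment ℝ a b ⊆ frontier P

/-!
Let the decagon be centred at the origin, with vertices `v 0, …, v 9` in counterclockwise order.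

A half-open decagon, consisting of the interior and of the relative interior of an arc of five
consecutive edges, is hit by every point exactly `k` times, as a small displacement of the point
into general position shows. So `k` is the number of tiles having the point in their interior, plus
its incidences with the edges and the inner vertices of the arc. Comparing the arcs which start at
successive vertices gives linear relations between these incidence numbers. In particular the
number `N` of tiles having the point as vertex `i` or `i + 5` does not depend on `i`, and twice `k`
is twice the interior count plus the number of edge incidences plus `4 * N`. Moreover, a point
of the half-open decagon either lies in the interior or on the first edge of the arc, or enters the
interior when moved back along that edge; hence the interior counts at the two ends of an edge
cannot both be small.

Now let `k ≤ 4`. At a vertex of a tile these relations force `N = 1`, no edge incidences and exactly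
`k - 2 ≤ 2` tiles around the point. If the point is vertex `i` of a tile, then at the far end of
the `i`-th edge it follows that some tile has vertex `i + 3` there, which therefore contains the
point in its interior, at the position `v (i + 3) - (v (i + 1) - v i)`. The relations also show that
with `i` every index `i + 6 * t` occurs at the point. Modulo `10` these form a cycle of odd length
`5`, and consecutive indices give distinct positions, so that there are at least three positions and
hence three tiles around the point, contradicting `k - 2 ≤ 2`.
-/

open scoped Topology

section Wedge

/-- The determinant `a.1 * b.2 - a.2 * b.1`, as an alternating bilinear form on the plane. -/
def wedge : ℝ × ℝ →ₗ[ℝ] ℝ × ℝ →ₗ[ℝ] ℝ :=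
  LinearMap.mk₂ ℝ (fun a b ↦ a.1 * b.2 - a.2 * b.1)
    (fun _ _ _ ↦ by simp only [Prod.fst_add, Prod.snd_add]; ring)
    (fun _ _ _ ↦ by simp only [Prod.smul_fst, Prod.smul_snd, smul_eq_mul]; ring)
    (fun _ _ _ ↦ by simp only [Prod.fst_add, Prod.snd_add]; ring)
    (fun _ _ _ ↦ by simp only [Prod.smul_fst, Prod.smul_snd, smul_eq_mul]; ring)

lemma wedge_apply (a b : ℝ × ℝ) : wedge a b = a.1 * b.2 - a.2 * b.1 := rfl

@[simp]
lemma wedge_self (a : ℝ × ℝ) : wedge a a = 0 := by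
  rw [wedge_apply]; ring

lemma neg_wedge (a b : ℝ × ℝ) : -wedge a b = wedge b a := by
  simp only [wedge_apply]; ring

lemma wedge_smul_eq (a b y : ℝ × ℝ) :
    wedge a b • y = wedge y b • a + wedge a y • b := by
  ext <;> simp only [wedge_apply, Prod.fst_add, Prod.snd_add, Prod.smul_fst, Prod.smul_snd,
    smul_eq_mul] <;> ring

lemma wedge_plucker (a b c d : ℝ × ℝ) :
    wedge a c * wedge b d = wedge b c * wedge a d + wedge a b * wedge c d := by
  simp only [wedge_apply]; ring

lemma eq_of_wedge_eq {a b y z : ℝ × ℝ} (hab : wedge a b ≠ 0) (ha : wedge a y = wedge a z)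
    (hb : wedge b y = wedge b z) : y = z := by
  apply smul_right_injective _ hab
  change wedge a b • y = wedge a b • z
  rw [wedge_smul_eq, wedge_smul_eq a b z, ha, ← neg_wedge b y, hb, neg_wedge]

end Wedge

section Edge

variable (v : ℤ → ℝ × ℝ) (j : ℤ) (y z : ℝ × ℝ)

/-- The edge vector from `v j` to `v (j + 1)`. -/
def edge : ℝ × ℝ := v (j + 1) - v j

/-- The affine function vanishing on the line of the `j`-th edge, positive on its left. -/
def slack : ℝ := wedge (edge v j) (y - v j)

lemma slack_sub_slack : slack v j y - slack v j z = wedge (edge v j) (y - z) := by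
  simp only [slack, ← map_sub, sub_sub_sub_cancel_right]

lemma slack_add (u : ℝ × ℝ) : slack v j (y + u) = slack v j y + wedge (edge v j) u := by
  rw [← sub_eq_iff_eq_add', slack_sub_slack, add_sub_cancel_left]

@[simp]
lemma slack_vertex_self : slack v j (v j) = 0 := by
  rw [slack, sub_self, map_zero]

@[simp]
lemma slack_vertex_succ : slack v j (v (j + 1)) = 0 := by
  rw [slack, ← edge, wedge_self]

lemma slack_combo {a b : ℝ} (hab : a + b = 1) :
    slack v j (a • y + b • z) = a * slack v j y + b * slack v j z := by
  obtain rfl := eq_sub_of_add_eq hab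
  simp only [slack, map_sub, map_add, map_smul, smul_eq_mul]
  ring

lemma continuous_slack : Continuous (slack v j) := by
  unfold slack
  simp only [wedge_apply]
  fun_prop

end Edge

/-- `v` runs counterclockwise through the vertices of a convex `2 * n`-gon symmetric about `0`,
indexed by `ℤ` modulo `2 * n`: every vertex lies strictly to the left of each edge
it does not belong to. -/
structure IsSymmPolygon (n : ℤ) (v : ℤ → ℝ × ℝ) : Prop where
  two_le : 2 ≤ n
  antiperiodic : Function.Antiperiodic v n
  slack_pos : ∀ ⦃j l⦄, j + 1 < l → l < j + 2 * n → 0 < slack v j (v l)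

/-- The polygon cut out by the edges of `v`. -/
def closedPolygon (v : ℤ → ℝ × ℝ) : Set (ℝ × ℝ) := {y | ∀ l, 0 ≤ slack v l y}

/-- The points strictly to the left of every edge of `v`. -/
def openPolygon (v : ℤ → ℝ × ℝ) : Set (ℝ × ℝ) := {y | ∀ l, 0 < slack v l y}

/-- The `j`-th edge of a `2 * n`-gon, without its endpoints. -/
def openEdge (n : ℤ) (v : ℤ → ℝ × ℝ) (j : ℤ) : Set (ℝ × ℝ) :=
  {y | slack v j y = 0 ∧ ∀ l ∈ Set.Ioo j (j + 2 * n), 0 < slack v l y}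

/-- The interior of a `2 * n`-gon together with the relative interior of the boundary arc formed
by the edges `i, …, i + m - 1`. For `m = n` the translates of this half-open polygon by a lattice
tiling would partition the plane. -/
def arcPolygon (n : ℤ) (v : ℤ → ℝ × ℝ) (i m : ℤ) : Set (ℝ × ℝ) :=
  {y | (∀ l ∈ Set.Ico i (i + m), 0 ≤ slack v l y) ∧
    ∀ l ∈ Set.Ico (i + m) (i + 2 * n), 0 < slack v l y}

namespace IsSymmPolygon

variable {n : ℤ} {v : ℤ → ℝ × ℝ} (h : IsSymmPolygon n v)
include h

lemma edge_antiperiodic : Function.Antiperiodic (edge v) n := fun j ↦ by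
  rw [edge, edge, add_right_comm, h.antiperiodic, h.antiperiodic]; abel

lemma slack_add_half (j : ℤ) (y : ℝ × ℝ) : slack v (j + n) y = slack v j (-y) := by
  rw [slack, slack, h.edge_antiperiodic, h.antiperiodic, map_neg, LinearMap.neg_apply, ← map_neg]
  congr 1; abel

lemma slack_periodic : Function.Periodic (slack v) (2 * n) := fun j ↦ by
  ext y; rw [two_mul, ← add_assoc, h.slack_add_half, h.slack_add_half, neg_neg]

lemma slack_neg (j : ℤ) (y : ℝ × ℝ) : slack v j (-y) = slack v j (v (j + n)) - slack v j y := by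
  rw [h.antiperiodic, slack, slack, slack, ← map_sub, ← sub_eq_zero, ← map_sub,
    show -y - v j - (-v j - v j - (y - v j)) = 0 by abel, map_zero]

lemma forall_of_forall_Ico {p : (ℝ × ℝ → ℝ) → Prop} (i : ℤ)
    (hp : ∀ l ∈ Set.Ico i (i + 2 * n), p (slack v l)) (l : ℤ) : p (slack v l) := by
  obtain ⟨m, hm, e⟩ := h.slack_periodic.exists_mem_Ico (by linarith [h.two_le]) l i
  exact e ▸ hp m hm

lemma slack_vertex_nonneg (j l : ℤ) : 0 ≤ slack v j (v l) := by
  obtain ⟨m, hm, e⟩ :=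
    h.antiperiodic.periodic_two_mul.exists_mem_Ico (by linarith [h.two_le]) l j
  rw [e]
  rcases hm.1.eq_or_lt with rfl | h1
  · simp
  rcases (Int.add_one_le_iff.2 h1).eq_or_lt with rfl | h2
  · simp
  · exact (h.slack_pos h2 hm.2).le

lemma slack_vertex_pos {j l : ℤ} (hjl : j < l) (hl : l + 1 < j + 2 * n) :
    0 < slack v l (v j) := by
  rw [← h.antiperiodic.periodic_two_mul]
  exact h.slack_pos hl (by linarith)

lemma wedge_edge_succ_pos (j : ℤ) : 0 < wedge (edge v j) (edge v (j + 1)) := by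
  have := h.two_le
  rw [edge.eq_1 v (j + 1), ← slack_sub_slack, slack_vertex_succ, sub_zero]
  exact h.slack_pos (by linarith) (by linarith)

lemma wedge_edge_pos {j l : ℤ} (hjl : j < l) (hl : l < j + n) :
    0 < wedge (edge v j) (edge v l) := by
  induction l, Int.add_one_le_iff.2 hjl using Int.leInduction with
  | base => exact h.wedge_edge_succ_pos j
  | succ l hjl' ih =>
    have hjl_pos := ih (by linarith) (by linarith)
    have hl_pos : 0 < wedge (edge v l) (v (j + n) - v (l + 1)) := by
      rw [← slack_sub_slack, slack_vertex_succ, sub_zero]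
      exact h.slack_pos hl (by linarith)
    have hj_pos : 0 < wedge (edge v j) (v (j + n) - v (l + 1)) := by
      rw [← slack_sub_slack, ← h.slack_neg, ← h.antiperiodic]
      exact h.slack_pos (by linarith) (by linarith)
    have hl_nonneg : 0 ≤ wedge (edge v (l + 1)) (v (j + n) - v (l + 1)) := by
      simpa [← slack_sub_slack] using h.slack_vertex_nonneg (l + 1) (j + n)
    refine pos_of_mul_pos_left (b := wedge (edge v l) (v (j + n) - v (l + 1))) ?_ hl_pos.le
    rw [wedge_plucker]
    have := h.wedge_edge_succ_pos l
    positivity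

lemma eq_vertex_of_slack_eq_zero {r : ℤ} {y : ℝ × ℝ} (h0 : slack v r y = 0)
    (h1 : slack v (r + 1) y = 0) : y = v (r + 1) := by
  apply eq_of_wedge_eq (h.wedge_edge_succ_pos r).ne' <;>
    rw [← sub_eq_zero, ← map_sub, ← slack_sub_slack] <;> simp [h0, h1]

lemma slack_succ_neg_of_slack_eq_zero {r s : ℤ} {y : ℝ × ℝ} (hrs : r + 1 < s) (hs : s < r + n)
    (hr0 : slack v r y = 0) (hs0 : slack v s y = 0) : slack v (r + 1) y < 0 := by
  have wr : wedge (edge v r) (y - v (r + 1)) = 0 := by simp [← slack_sub_slack, hr0]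
  have ws : wedge (edge v s) (y - v (r + 1)) < 0 := by
    rw [← slack_sub_slack, hs0, zero_sub, neg_lt_zero]
    exact h.slack_vertex_pos hrs (by linarith)
  have hrs' := h.wedge_edge_pos (by linarith) hs
  have key := wedge_plucker (edge v r) (edge v (r + 1)) (edge v s) (y - v (r + 1))
  rw [wr, mul_zero, zero_add] at key
  refine neg_of_mul_neg_right (a := wedge (edge v r) (edge v s)) ?_ hrs'.le
  rw [slack, key]
  exact mul_neg_of_pos_of_neg (h.wedge_edge_succ_pos r) ws

end IsSymmPolygon

section Chord

namespace IsSymmPolygon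

variable {n : ℤ} {v : ℤ → ℝ × ℝ} (h : IsSymmPolygon n v)
include h

lemma slack_half_pos (j : ℤ) : 0 < slack v j (v (j + n)) :=
  h.slack_pos (by linarith [h.two_le]) (by linarith [h.two_le])

lemma exists_eq_combo_add_smul_edge (j : ℤ) (y : ℝ × ℝ) :
    ∃ a b μ : ℝ, a + b = 1 ∧ slack v (j + n) y = a * slack v j (v (j + n)) ∧
      slack v j y = b * slack v j (v (j + n)) ∧
      y = a • v (j + 1) + b • v (j + n) + μ • edge v j := by
  set d := v (j + n) - v (j + 1) with d_def
  have hd : wedge (edge v j) d = slack v j (v (j + n)) := by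
    rw [← slack_sub_slack, slack_vertex_succ, sub_zero]
  have hy : wedge (edge v j) (y - v (j + 1)) = slack v j y := by
    rw [← slack_sub_slack, slack_vertex_succ, sub_zero]
  have hw := (h.slack_half_pos j).ne'
  refine ⟨slack v (j + n) y / slack v j (v (j + n)), slack v j y / slack v j (v (j + n)),
    wedge (y - v (j + 1)) d / slack v j (v (j + n)), ?_, by field_simp, by field_simp, ?_⟩
  · rw [h.slack_add_half, h.slack_neg]
    field_simp
    ring
  · have key := wedge_smul_eq (edge v j) d (y - v (j + 1))
    rw [hd, hy] at key
    rw [h.slack_add_half, h.slack_neg]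
    apply smul_right_injective _ hw
    simp only [smul_add, smul_smul, mul_div_cancel₀ _ hw, sub_smul, d_def] at key ⊢
    linear_combination (norm := module) key

lemma slack_pos_of_combo_add_smul_edge (hn : 3 ≤ n) {j l : ℤ} {a b μ : ℝ} (ha : 0 < a)
    (hb : 0 < b) (hab : a + b = 1) (hμ : 0 ≤ μ) (hl : l ∈ Set.Ioo (j + n) (j + 2 * n)) :
    0 < slack v l (a • v j + b • v (j + n + 1) + μ • edge v j) := by
  obtain ⟨hjl, hlj⟩ := hl
  have he : 0 < wedge (edge v l) (edge v j) := by
    rw [← h.edge_antiperiodic.periodic_two_mul j]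
    exact h.wedge_edge_pos hlj (by linarith)
  rw [slack_add, slack_combo _ _ _ _ hab, map_smul, smul_eq_mul]
  have hvj := h.slack_vertex_nonneg l j
  have hvjn := h.slack_vertex_nonneg l (j + n + 1)
  have hpos : 0 < slack v l (v j) ∨ 0 < slack v l (v (j + n + 1)) := by
    rcases (Int.add_one_le_iff.2 hjl).eq_or_lt with rfl | hl'
    · exact .inl (h.slack_vertex_pos (by linarith) (by linarith))
    · exact .inr (h.slack_vertex_pos (by linarith) (by linarith))
  rcases hpos with hpos | hpos <;> positivity

lemma sub_edge_mem_openPolygon (hn : 3 ≤ n) {j s : ℤ} {y : ℝ × ℝ}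
    (hj : 0 < slack v j y) (hjn : 0 < slack v (j + n) y)
    (hy : ∀ l ∈ Set.Ioo j (j + n), 0 ≤ slack v l y) (hs : s ∈ Set.Ioo j (j + n))
    (hs0 : slack v s y = 0) : y - edge v j ∈ openPolygon v := by
  obtain ⟨a, b, μ, hab, ha, hb, rfl⟩ := h.exists_eq_combo_add_smul_edge j y
  have hw := h.slack_half_pos j
  replace ha : 0 < a := pos_of_mul_pos_left (ha ▸ hjn) hw.le
  replace hb : 0 < b := pos_of_mul_pos_left (hb ▸ hj) hw.le
  have hμ : 0 ≤ μ := by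
    have he := h.wedge_edge_pos hs.1 hs.2
    have hvj := h.slack_vertex_nonneg s (j + 1)
    have hvjn := h.slack_vertex_nonneg s (j + n)
    rw [slack_add, slack_combo _ _ _ _ hab, map_smul, smul_eq_mul, ← neg_wedge] at hs0
    refine nonneg_of_mul_nonneg_left ?_ he
    linear_combination a * hvj + b * hvjn + hs0
  have hsub : a • v (j + 1) + b • v (j + n) + μ • edge v j - edge v j =
      a • v j + b • v (j + n + 1) + μ • edge v j := by
    have h1 : v (j + 1) = v j + edge v j := by rw [edge]; abel
    have h2 : v (j + n) = v (j + n + 1) + edge v j := by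
      rw [add_right_comm, h.antiperiodic, h.antiperiodic, edge]; abel
    rw [h1, h2, eq_sub_of_add_eq hab]; module
  refine h.forall_of_forall_Ico (p := fun f ↦ 0 < f _) j fun l hl ↦ ?_
  by_cases hlt : j + n < l
  · rw [hsub]
    exact h.slack_pos_of_combo_add_smul_edge hn ha hb hab hμ ⟨hlt, hl.2⟩
  rw [sub_eq_add_neg, slack_add, map_neg, neg_wedge]
  rcases hl.1.eq_or_lt with rfl | hjl
  · simpa using hj
  rcases (not_lt.1 hlt).eq_or_lt with rfl | hljn
  · rw [h.edge_antiperiodic, map_neg, wedge_self]; simpa using hjn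
  · exact add_pos_of_nonneg_of_pos (hy l ⟨hjl, hljn⟩) (h.wedge_edge_pos hjl hljn)

lemma vertex_sub_edge_mem_openPolygon (hn : 3 ≤ n) {i l : ℤ} (hil : i + 1 < l) (hl : l < i + n) :
    v l - edge v i ∈ openPolygon v :=
  h.sub_edge_mem_openPolygon hn (s := l) (h.slack_pos hil (by linarith))
    (h.slack_vertex_pos hl (by linarith)) (fun _ _ ↦ h.slack_vertex_nonneg _ _)
    ⟨by linarith, hl⟩ (slack_vertex_self v l)

end IsSymmPolygon

end Chord

lemma eventually_pos_add_mul {a b : ℝ} (h : 0 < a ∨ 0 ≤ a ∧ 0 < b) :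
    ∀ᶠ r in 𝓝[>] (0 : ℝ), 0 < a + r * b := by
  rcases h with ha | ⟨ha, hb⟩
  · have : Filter.Tendsto (fun r : ℝ ↦ a + r * b) (𝓝 0) (𝓝 (a + 0 * b)) :=
      Continuous.tendsto (by fun_prop) 0
    exact (this.eventually_const_lt (by simpa)).filter_mono nhdsWithin_le_nhds
  · filter_upwards [self_mem_nhdsWithin] with r (hr : 0 < r)
    positivity

section Arc

namespace IsSymmPolygon

variable {n : ℤ} {v : ℤ → ℝ × ℝ} (h : IsSymmPolygon n v)

include h

lemma arcPolygon_zero (i : ℤ) : arcPolygon n v i 0 = openPolygon v := by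
  refine Set.Subset.antisymm (fun y hy ↦ ?_) fun y hy ↦ ⟨fun l _ ↦ (hy l).le, fun l _ ↦ hy l⟩
  exact h.forall_of_forall_Ico (p := fun f ↦ 0 < f y) i (by simpa using hy.2)

lemma arcPolygon_subset_closedPolygon (i m : ℤ) : arcPolygon n v i m ⊆ closedPolygon v :=
  fun y hy ↦ h.forall_of_forall_Ico (p := fun f ↦ 0 ≤ f y) i fun l hl ↦
    (lt_or_ge l (i + m)).elim (fun hlm ↦ hy.1 l ⟨hl.1, hlm⟩) fun hml ↦ (hy.2 l ⟨hml, hl.2⟩).le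

lemma openEdge_subset_closedPolygon (j : ℤ) : openEdge n v j ⊆ closedPolygon v :=
  fun y hy ↦ h.forall_of_forall_Ico (p := fun f ↦ 0 ≤ f y) j fun l hl ↦
    hl.1.eq_or_lt.elim (fun e ↦ e ▸ hy.1.ge) fun hjl ↦ (hy.2 l ⟨hjl, hl.2⟩).le

lemma vertex_mem_closedPolygon (j : ℤ) : v j ∈ closedPolygon v :=
  fun l ↦ h.slack_vertex_nonneg l j

lemma openEdge_periodic : Function.Periodic (openEdge n v) (2 * n) := fun j ↦ by
  ext y
  refine and_congr (by rw [h.slack_periodic]) ⟨fun hy l hl ↦ ?_, fun hy l hl ↦ ?_⟩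
  · rw [← h.slack_periodic]
    exact hy _ ⟨by linarith [hl.1], by linarith [hl.2]⟩
  · rw [← sub_add_cancel l (2 * n), h.slack_periodic]
    exact hy _ ⟨by linarith [hl.1], by linarith [hl.2]⟩

lemma arcPolygon_succ (i : ℤ) {m : ℤ} (hm0 : 0 ≤ m) :
    arcPolygon n v i (m + 1) =
      arcPolygon n v i m ∪ (arcPolygon n v i (m + 1) ∩ {y | slack v (i + m) y = 0}) := by
  ext y
  refine ⟨fun hy ↦ ?_, ?_⟩
  · obtain h0 | hpos := (hy.1 (i + m) ⟨by linarith, by linarith⟩).eq_or_lt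
    · exact .inr ⟨hy, h0.symm⟩
    · refine .inl ⟨fun l hl ↦ hy.1 l ⟨hl.1, by linarith [hl.2]⟩, fun l hl ↦ ?_⟩
      obtain rfl | hlt := hl.1.eq_or_lt
      · exact hpos
      · exact hy.2 l ⟨by linarith, hl.2⟩
  · rintro (hy | hy)
    · exact ⟨fun l _ ↦ h.arcPolygon_subset_closedPolygon i m hy l,
        fun l hl ↦ hy.2 l ⟨by linarith [hl.1], hl.2⟩⟩
    · exact hy.1

lemma disjoint_arcPolygon_line (i : ℤ) {m : ℤ} (hmn : m < n) :
    Disjoint (arcPolygon n v i m) {y | slack v (i + m) y = 0} :=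
  Set.disjoint_left.2 fun _ hy ↦ (hy.2 _ ⟨le_rfl, by linarith [h.two_le]⟩).ne'

lemma openEdge_subset_arcPolygon (i : ℤ) {m : ℤ} (hm0 : 0 ≤ m) :
    openEdge n v (i + m) ⊆ arcPolygon n v i (m + 1) := fun y hy ↦
  ⟨fun l _ ↦ h.openEdge_subset_closedPolygon _ hy l,
    fun l hl ↦ hy.2 l ⟨by linarith [hl.1], by linarith [hl.2]⟩⟩

lemma vertex_mem_arcPolygon (i : ℤ) {m : ℤ} (hm0 : 0 < m) :
    v (i + m) ∈ arcPolygon n v i (m + 1) :=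
  ⟨fun l _ ↦ h.slack_vertex_nonneg l _,
    fun l hl ↦ h.slack_vertex_pos (by linarith [hl.1]) (by linarith [hl.2])⟩

lemma mem_openEdge_of_arcPolygon {i m : ℤ} {y : ℝ × ℝ} (hy : y ∈ arcPolygon n v i (m + 1))
    (hline : slack v (i + m) y = 0) (hpos : ∀ l ∈ Set.Ico i (i + m), 0 < slack v l y) :
    y ∈ openEdge n v (i + m) := by
  refine ⟨hline, fun l hl ↦ ?_⟩
  obtain hlt | hle := lt_or_ge l (i + 2 * n)
  · exact hy.2 l ⟨by linarith [hl.1], hlt⟩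
  · rw [← sub_add_cancel l (2 * n), h.slack_periodic]
    exact hpos _ ⟨by linarith, by linarith [hl.2]⟩

lemma arcPolygon_one_inter_line (i : ℤ) :
    arcPolygon n v i (0 + 1) ∩ {y | slack v (i + 0) y = 0} = openEdge n v (i + 0) := by
  refine Set.Subset.antisymm (fun y hy ↦ ?_)
    fun y hy ↦ ⟨h.openEdge_subset_arcPolygon i le_rfl hy, hy.1⟩
  exact h.mem_openEdge_of_arcPolygon hy.1 hy.2 (by simp)

lemma arcPolygon_succ_inter_line (i : ℤ) {m : ℤ} (hm0 : 0 < m) (hmn : m < n) :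
    arcPolygon n v i (m + 1) ∩ {y | slack v (i + m) y = 0} =
      openEdge n v (i + m) ∪ {v (i + m)} := by
  refine Set.Subset.antisymm (fun y ⟨hy, hline⟩ ↦ ?_) (Set.union_subset
    (fun y hy ↦ ⟨h.openEdge_subset_arcPolygon i hm0.le hy, hy.1⟩)
    (Set.singleton_subset_iff.2 ⟨h.vertex_mem_arcPolygon i hm0, slack_vertex_self _ _⟩))
  by_cases hprev : slack v (i + m - 1) y = 0
  · right
    simpa using h.eq_vertex_of_slack_eq_zero hprev (by simpa using hline)
  · refine .inl (h.mem_openEdge_of_arcPolygon hy hline fun l hl ↦ ?_)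
    refine (hy.1 l ⟨hl.1, by linarith [hl.2]⟩).lt_of_ne' fun hl0 ↦ ?_
    have hlm : l + 1 < i + m := by
      refine lt_of_le_of_ne hl.2 fun e ↦ hprev ?_
      rwa [← e, add_sub_cancel_right]
    exact (h.slack_succ_neg_of_slack_eq_zero hlm (by linarith [hl.1]) hl0 hline).not_ge
      (hy.1 _ ⟨by linarith [hl.1], by linarith⟩)

lemma disjoint_openEdge_vertex (j : ℤ) : Disjoint (openEdge n v j) {v j} := by
  refine Set.disjoint_singleton_right.2 fun hj ↦ ?_
  have hn := h.two_le
  have hpos := hj.2 (j - 1 + 2 * n) ⟨by linarith, by linarith⟩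
  have hprev := slack_vertex_succ v (j - 1)
  rw [h.slack_periodic] at hpos
  rw [sub_add_cancel] at hprev
  exact hpos.ne' hprev

lemma mem_of_mem_arcPolygon (hn : 3 ≤ n) {j : ℤ} {y : ℝ × ℝ} (hy : y ∈ arcPolygon n v j n) :
    y ∈ openPolygon v ∨ y ∈ openEdge n v j ∨ y = v (j + 1) ∨ y - edge v j ∈ openPolygon v := by
  have hnonneg : ∀ l ∈ Set.Ioo j (j + n), 0 ≤ slack v l y := fun l hl ↦ hy.1 l ⟨hl.1.le, hl.2⟩
  by_cases hpos : ∀ l ∈ Set.Ioo j (j + n), 0 < slack v l y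
  · have hpos' : ∀ l ∈ Set.Ioo j (j + 2 * n), 0 < slack v l y := fun l hl ↦
      (lt_or_ge l (j + n)).elim (fun hlt ↦ hpos l ⟨hl.1, hlt⟩) fun hle ↦ hy.2 l ⟨hle, hl.2⟩
    obtain hj | hj := (hy.1 j ⟨le_rfl, by linarith⟩).eq_or_lt
    · exact .inr (.inl ⟨hj.symm, hpos'⟩)
    · refine .inl (h.forall_of_forall_Ico (p := fun f ↦ 0 < f y) j fun l hl ↦ ?_)
      exact hl.1.eq_or_lt.elim (fun e ↦ e ▸ hj) fun hlt ↦ hpos' l ⟨hlt, hl.2⟩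
  push Not at hpos
  obtain ⟨s, hs, hs0⟩ := hpos
  replace hs0 := hs0.antisymm (hnonneg s hs)
  obtain hj | hj := (hy.1 j ⟨le_rfl, by linarith⟩).eq_or_lt
  · obtain rfl | hjs := (Int.add_one_le_iff.2 hs.1).eq_or_lt
    · exact .inr (.inr (.inl (h.eq_vertex_of_slack_eq_zero hj.symm hs0)))
    · cases (h.slack_succ_neg_of_slack_eq_zero hjs hs.2 hj.symm hs0).not_ge
        (hnonneg _ ⟨by linarith, by linarith [hs.2]⟩)
  · exact .inr (.inr (.inr (h.sub_edge_mem_openPolygon hn hj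
      (hy.2 _ ⟨le_rfl, by linarith⟩) hnonneg hs hs0)))

end IsSymmPolygon

end Arc

section GenericDirection

namespace IsSymmPolygon

variable {n : ℤ} {v : ℤ → ℝ × ℝ} (h : IsSymmPolygon n v)
include h

lemma wedge_edge_sub_edge_pos {i l : ℤ} (hl : l ∈ Set.Ico i (i + n)) :
    0 < wedge (edge v l) (edge v (i + n - 1) - edge v i) := by
  have hn := h.two_le
  rw [map_sub, sub_eq_add_neg, neg_wedge]
  obtain rfl | hil := hl.1.eq_or_lt
  · rw [wedge_self, add_zero]
    exact h.wedge_edge_pos (by linarith) (by linarith)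
  · have hpos := h.wedge_edge_pos hil hl.2
    obtain rfl | hlast := (Int.le_sub_one_iff.2 hl.2).eq_or_lt
    · simpa using hpos
    · exact add_pos (h.wedge_edge_pos hlast (by linarith)) hpos

lemma wedge_edge_sub_edge_neg {i l : ℤ} (hl : l ∈ Set.Ico (i + n) (i + 2 * n)) :
    wedge (edge v l) (edge v (i + n - 1) - edge v i) < 0 := by
  rw [← sub_add_cancel l n, h.edge_antiperiodic, map_neg, LinearMap.neg_apply, neg_lt_zero]
  exact h.wedge_edge_sub_edge_pos ⟨by linarith [hl.1], by linarith [hl.2]⟩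

lemma eventually_mem_openPolygon {i : ℤ} {y : ℝ × ℝ} (hy : y ∈ arcPolygon n v i n) :
    ∀ᶠ r in 𝓝[>] (0 : ℝ), y + r • (edge v (i + n - 1) - edge v i) ∈ openPolygon v := by
  have key : ∀ l ∈ Set.Ico i (i + 2 * n), ∀ᶠ r in 𝓝[>] (0 : ℝ),
      0 < slack v l (y + r • (edge v (i + n - 1) - edge v i)) := fun l hl ↦ by
    simp only [slack_add, map_smul, smul_eq_mul]
    apply eventually_pos_add_mul
    obtain hlt | hle := lt_or_ge l (i + n)
    · exact .inr ⟨hy.1 l ⟨hl.1, hlt⟩, h.wedge_edge_sub_edge_pos ⟨hl.1, hlt⟩⟩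
    · exact .inl (hy.2 l ⟨hle, hl.2⟩)
  filter_upwards [(Set.finite_Ico i (i + 2 * n)).eventually_all.2 key] with r hr
  exact h.forall_of_forall_Ico (p := fun f ↦ 0 < f _) i hr

lemma eventually_notMem_closedPolygon {i : ℤ} {y : ℝ × ℝ} (hy : y ∉ arcPolygon n v i n) :
    ∀ᶠ r in 𝓝[>] (0 : ℝ), y + r • (edge v (i + n - 1) - edge v i) ∉ closedPolygon v := by
  obtain ⟨l, hl⟩ : ∃ l, 0 < -slack v l y ∨
      0 ≤ -slack v l y ∧ 0 < -wedge (edge v l) (edge v (i + n - 1) - edge v i) := by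
    by_contra! hcon
    refine hy ⟨fun l hl ↦ neg_nonpos.1 (hcon l).1, fun l hl ↦ ?_⟩
    by_contra hle
    exact (h.wedge_edge_sub_edge_neg hl).not_ge
      (neg_nonpos.1 ((hcon l).2 (neg_nonneg.2 (not_lt.1 hle))))
  filter_upwards [eventually_pos_add_mul hl] with r hr hmem
  have := hmem l
  rw [slack_add, map_smul, smul_eq_mul] at this
  linarith

lemma isOpen_openPolygon : IsOpen (openPolygon v) := by
  have : openPolygon v = ⋂ l ∈ Set.Ico 0 (0 + 2 * n), {y | 0 < slack v l y} := by
    refine Set.Subset.antisymm (fun y hy ↦ Set.mem_iInter₂.2 fun l _ ↦ hy l) fun y hy ↦ ?_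
    exact h.forall_of_forall_Ico (p := fun f ↦ 0 < f y) 0 (Set.mem_iInter₂.1 hy)
  rw [this]
  exact (Set.finite_Ico _ _).isOpen_biInter fun l _ ↦
    isOpen_lt continuous_const (continuous_slack v l)

lemma openPolygon_subset_interior : openPolygon v ⊆ interior (closedPolygon v) :=
  interior_maximal (fun _ hy l ↦ (hy l).le) h.isOpen_openPolygon

end IsSymmPolygon

end GenericDirection

lemma smul_add_smul_mem_of_zero_mem {E : Type*} [AddCommGroup E] [Module ℝ E] {K : Set E}
    (hK : Convex ℝ K) (h0 : (0 : E) ∈ K) {a b : E} (ha : a ∈ K) (hb : b ∈ K) {s t : ℝ}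
    (hs : 0 ≤ s) (ht : 0 ≤ t) (hst : s + t ≤ 1) : s • a + t • b ∈ K := by
  have := hK.sum_mem (t := Finset.univ) (w := ![s, t, 1 - s - t]) (z := ![a, b, 0])
    (by simp [Fin.forall_fin_succ, hs, ht, le_sub_iff_add_le', hst])
    (by simp [Fin.sum_univ_three]) (by simp [Fin.forall_fin_succ, ha, hb, h0])
  simpa [Fin.sum_univ_three] using this

lemma exists_nonneg_and_succ_nonpos {f : ℤ → ℝ} {n : ℤ} (hn : 0 < n)
    (hf : Function.Antiperiodic f n) : ∃ i, 0 ≤ f i ∧ f (i + 1) ≤ 0 := by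
  by_contra! hpos
  obtain ⟨i, hi⟩ : ∃ i, 0 ≤ f i := by
    obtain h0 | h0 := le_total 0 (f 0)
    · exact ⟨0, h0⟩
    · exact ⟨0 + n, by rw [hf]; linarith⟩
  have hall : ∀ l, i + 1 ≤ l → 0 < f l := fun l hl ↦ by
    induction l, hl using Int.leInduction with
    | base => exact hpos i hi
    | succ l _ ih => exact hpos l ih.le
  have := hall (i + n) (by linarith)
  rw [hf] at this
  linarith

section ConvexHull

lemma convex_closedPolygon (v : ℤ → ℝ × ℝ) : Convex ℝ (closedPolygon v) :=
  fun y hy z hz a b ha hb hab l ↦ by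
    rw [slack_combo v l y z hab]
    exact add_nonneg (mul_nonneg ha (hy l)) (mul_nonneg hb (hz l))

namespace IsSymmPolygon

variable {n : ℤ} {v : ℤ → ℝ × ℝ} (h : IsSymmPolygon n v)
include h

lemma slack_zero_pos (j : ℤ) : 0 < slack v j 0 := by
  have := h.slack_neg j 0
  rw [neg_zero] at this
  linarith [h.slack_half_pos j]

lemma range_finite : (Set.range v).Finite := by
  have hn := h.two_le
  refine ((Set.finite_Ico 0 (0 + 2 * n)).image v).subset ?_
  rintro _ ⟨l, rfl⟩
  obtain ⟨m, hm, e⟩ := h.antiperiodic.periodic_two_mul.exists_mem_Ico (by linarith) l 0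
  exact ⟨m, hm, e.symm⟩

lemma zero_mem_convexHull : (0 : ℝ × ℝ) ∈ convexHull ℝ (Set.range v) := by
  have hmem : ∀ l, v l ∈ convexHull ℝ (Set.range v) := fun l ↦ subset_convexHull ℝ _ ⟨l, rfl⟩
  have := (convex_convexHull ℝ _) (hmem 0) (hmem (0 + n)) (a := 1 / 2) (b := 1 / 2)
    (by norm_num) (by norm_num) (by norm_num)
  rwa [h.antiperiodic, smul_neg, add_neg_cancel] at this

lemma closedPolygon_subset_convexHull : closedPolygon v ⊆ convexHull ℝ (Set.range v) := by
  intro y hy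
  obtain ⟨i, hi0, hi1⟩ := exists_nonneg_and_succ_nonpos (f := fun j ↦ wedge (v j) y)
    (by linarith [h.two_le]) fun j ↦ by simp only [h.antiperiodic j, map_neg, LinearMap.neg_apply]
  have hslack : ∀ z, slack v i z = wedge (v i) (v (i + 1)) - wedge z (v (i + 1)) - wedge (v i) z :=
    fun z ↦ by simp only [slack, edge, wedge_apply, Prod.fst_sub, Prod.snd_sub]; ring
  have hpos : 0 < wedge (v i) (v (i + 1)) := by simpa [hslack] using h.slack_zero_pos i
  have hs : 0 ≤ wedge y (v (i + 1)) := by rw [← neg_wedge]; linarith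
  have key : y = (wedge y (v (i + 1)) / wedge (v i) (v (i + 1))) • v i +
      (wedge (v i) y / wedge (v i) (v (i + 1))) • v (i + 1) := by
    apply smul_right_injective _ hpos.ne'
    simp only [smul_add, smul_smul, mul_div_cancel₀ _ hpos.ne']
    exact wedge_smul_eq _ _ _
  rw [key]
  refine smul_add_smul_mem_of_zero_mem (convex_convexHull ℝ _) h.zero_mem_convexHull
    (subset_convexHull ℝ _ ⟨i, rfl⟩) (subset_convexHull ℝ _ ⟨i + 1, rfl⟩)
    (div_nonneg hs hpos.le) (div_nonneg hi0 hpos.le) ?_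
  rw [← add_div, div_le_one hpos]
  linarith [hy i, hslack y]

lemma closedPolygon_eq_convexHull : closedPolygon v = convexHull ℝ (Set.range v) :=
  h.closedPolygon_subset_convexHull.antisymm <|
    convexHull_min (Set.range_subset_iff.2 h.vertex_mem_closedPolygon) (convex_closedPolygon v)

lemma isBounded_closedPolygon : Bornology.IsBounded (closedPolygon v) := by
  rw [h.closedPolygon_eq_convexHull]
  exact (h.range_finite.isCompact_convexHull ℝ).isBounded

end IsSymmPolygon

end ConvexHull

section TranslateCount

variable {ι E : Type*}

/-- The number of translates `T + x i` that contain `p`; junk value `0` if there are infinitely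
many. -/
noncomputable def translateCount [Sub E] (x : ι → E) (T : Set E) (p : E) : ℕ :=
  {i | p - x i ∈ T}.ncard

lemma translateCount_union [Sub E] {x : ι → E} {S T : Set E} (hST : Disjoint S T) {p : E}
    (hS : {i | p - x i ∈ S}.Finite) (hT : {i | p - x i ∈ T}.Finite) :
    translateCount x (S ∪ T) p = translateCount x S p + translateCount x T p :=
  Set.ncard_union_eq (hST.preimage fun i ↦ p - x i) hS hT

lemma translateCount_union_le [Sub E] (x : ι → E) (S T : Set E) (p : E) :
    translateCount x (S ∪ T) p ≤ translateCount x S p + translateCount x T p :=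
  Set.ncard_union_le _ _

lemma translateCount_mono [Sub E] {x : ι → E} {S T : Set E} (hST : S ⊆ T) {p : E}
    (hT : {i | p - x i ∈ T}.Finite) : translateCount x S p ≤ translateCount x T p :=
  Set.ncard_le_ncard (fun _ hi ↦ hST hi) hT

lemma translateCount_preimage_add_right [AddCommGroup E] (x : ι → E) (T : Set E) (p u : E) :
    translateCount x ((· + u) ⁻¹' T) p = translateCount x T (p + u) := by
  simp only [translateCount, Set.mem_preimage, sub_add_eq_add_sub]

lemma finite_sub_mem [SeminormedAddCommGroup E] {x : ι → E} (hx : ∀ R : ℝ, {i | ‖x i‖ ≤ R}.Finite)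
    {T : Set E} (hT : Bornology.IsBounded T) (p : E) : {i | p - x i ∈ T}.Finite := by
  obtain ⟨B, hB⟩ := hT.exists_norm_le
  refine (hx (‖p‖ + B)).subset fun i (hi : p - x i ∈ T) ↦ ?_
  calc ‖x i‖ = ‖p - (p - x i)‖ := by rw [sub_sub_cancel]
    _ ≤ ‖p‖ + ‖p - x i‖ := norm_sub_le _ _
    _ ≤ ‖p‖ + B := by gcongr; exact hB _ hi

lemma finite_add_smul_sub_mem [SeminormedAddCommGroup E] [NormedSpace ℝ E] {x : ι → E}
    (hx : ∀ R : ℝ, {i | ‖x i‖ ≤ R}.Finite) {K : Set E} (hK : Bornology.IsBounded K) (p u : E) :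
    {i | ∃ r ∈ Set.Icc (0 : ℝ) 1, p + r • u - x i ∈ K}.Finite := by
  obtain ⟨B, hB⟩ := hK.exists_norm_le
  refine (hx (‖p‖ + ‖u‖ + B)).subset fun i ⟨r, hr, hi⟩ ↦ ?_
  calc ‖x i‖ = ‖p + r • u - (p + r • u - x i)‖ := by rw [sub_sub_cancel]
    _ ≤ ‖p‖ + ‖r • u‖ + ‖p + r • u - x i‖ :=
      (norm_sub_le _ _).trans (by gcongr; exact norm_add_le _ _)
    _ ≤ ‖p‖ + ‖u‖ + B := by
      gcongr
      · rw [norm_smul, Real.norm_of_nonneg hr.1]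
        exact mul_le_of_le_one_left (norm_nonneg _) hr.2
      · exact hB _ hi

end TranslateCount

namespace IsKFoldTranslativeTiling

variable {ι : Type} {K T : Set (ℝ × ℝ)} {x : ι → ℝ × ℝ} {k : ℕ}

/-- Moving `p` slightly in the direction `u` takes it off all boundaries, so that the covering and
the packing bound apply to the same translates. -/
lemma translateCount_eq (h : IsKFoldTranslativeTiling K x k) (hK : Bornology.IsBounded K)
    (hT : T ⊆ K) {u : ℝ × ℝ} (hin : ∀ y ∈ T, ∀ᶠ r in 𝓝[>] (0 : ℝ), y + r • u ∈ interior K)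
    (hout : ∀ y ∉ T, ∀ᶠ r in 𝓝[>] (0 : ℝ), y + r • u ∉ K) (p : ℝ × ℝ) :
    translateCount x T p = k := by
  obtain ⟨hx, hcover, hpack⟩ := h
  have hTfin := finite_sub_mem hx (hK.subset hT) p
  have hlt : ∀ᶠ r in 𝓝[>] (0 : ℝ), r < 1 :=
    (eventually_lt_nhds one_pos).filter_mono nhdsWithin_le_nhds
  have hlocal : ∀ᶠ r in 𝓝[>] (0 : ℝ), ∀ i ∈ {i | ∃ r ∈ Set.Icc (0 : ℝ) 1, p + r • u - x i ∈ K},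
      (p - x i ∈ T → p + r • u - x i ∈ interior K) ∧ (p - x i ∉ T → p + r • u - x i ∉ K) := by
    refine (finite_add_smul_sub_mem hx hK p u).eventually_all.2 fun i _ ↦ ?_
    simp only [add_sub_right_comm]
    by_cases hi : p - x i ∈ T
    · filter_upwards [hin _ hi] with r hr using ⟨fun _ ↦ hr, fun hn ↦ absurd hi hn⟩
    · filter_upwards [hout _ hi] with r hr using ⟨fun hn ↦ absurd hn hi, fun _ ↦ hr⟩
  obtain ⟨r, ⟨hr1, hr⟩, hr0 : 0 < r⟩ := ((hlt.and hlocal).and self_mem_nhdsWithin).exists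
  apply le_antisymm
  · rw [translateCount, Set.ncard_eq_toFinset_card _ hTfin]
    refine hpack (p + r • u) _ fun i hi ↦ ?_
    rw [Set.Finite.mem_toFinset] at hi
    exact (hr i ⟨0, by simp, by simpa using hT hi⟩).1 hi
  · obtain ⟨s, hks, hs⟩ := hcover (p + r • u)
    rw [← Set.ncard_coe_finset] at hks
    refine hks.trans (Set.ncard_le_ncard (fun i hi ↦ ?_) hTfin)
    by_contra hn
    exact (hr i ⟨r, ⟨hr0.le, hr1.le⟩, hs i hi⟩).2 hn (hs i hi)

lemma translate (h : IsKFoldTranslativeTiling K x k) (c : ℝ × ℝ) :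
    IsKFoldTranslativeTiling ((· + c) ⁻¹' K) (fun i ↦ x i + c) k := by
  obtain ⟨hx, hcover, hpack⟩ := h
  have hsub : ∀ p i, p - (x i + c) + c = p - x i := fun p i ↦ by abel
  refine ⟨fun R ↦ (hx (R + ‖c‖)).subset fun i (hi : ‖x i + c‖ ≤ R) ↦ ?_, fun p ↦ ?_,
    fun p s hs ↦ ?_⟩
  · calc ‖x i‖ = ‖x i + c - c‖ := by rw [add_sub_cancel_right]
      _ ≤ ‖x i + c‖ + ‖c‖ := norm_sub_le _ _
      _ ≤ R + ‖c‖ := by gcongr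
  · simpa only [Set.mem_preimage, hsub] using hcover p
  · refine hpack p s fun i hi ↦ ?_
    have := hs i hi
    rw [← Homeomorph.coe_addRight, ← Homeomorph.preimage_interior] at this
    simpa [hsub] using this

end IsKFoldTranslativeTiling

section Counting

variable {ι : Type} (n : ℤ) (v : ℤ → ℝ × ℝ) (x : ι → ℝ × ℝ) (j : ℤ) (p : ℝ × ℝ)

/-- The number of tiles that contain `p` in their interior. -/
noncomputable def interiorCount : ℕ := translateCount x (openPolygon v) p

/-- The number of tiles whose `j`-th edge contains `p` in its relative interior. -/
noncomputable def edgeCount : ℕ := translateCount x (openEdge n v j) p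

/-- The number of tiles whose `j`-th vertex is `p`. -/
noncomputable def vertexCount : ℕ := translateCount x {v j} p

/-- The number of tiles with `p` in the relative interior of one of the two edges parallel to
`edge v j`. -/
noncomputable def edgePairCount : ℕ := edgeCount n v x j p + edgeCount n v x (j + n) p

/-- The number of tiles with `p` as their `j`-th vertex or the vertex opposite to it. -/
noncomputable def vertexPairCount : ℕ := vertexCount v x j p + vertexCount v x (j + n) p

variable {n v x}

lemma exists_sub_eq_vertex (hj : 0 < vertexCount v x j p) : ∃ i, p - x i = v j :=
  Set.nonempty_of_ncard_ne_zero hj.ne'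

lemma vertexCount_add {i j : ℤ} {p w : ℝ × ℝ} (hw : v j + w = v i) :
    vertexCount v x i (p + w) = vertexCount v x j p := by
  simp only [vertexCount, translateCount, Set.mem_singleton_iff, ← hw, add_sub_right_comm,
    add_left_inj]

lemma vertexCount_succ_add_edge (i : ℤ) (p : ℝ × ℝ) :
    vertexCount v x (i + 1) (p + edge v i) = vertexCount v x i p :=
  vertexCount_add (by rw [edge, add_sub_cancel])

namespace IsSymmPolygon

variable {k : ℕ} (h : IsSymmPolygon n v) (ht : IsKFoldTranslativeTiling (closedPolygon v) x k)
include h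

lemma vertexCount_periodic : Function.Periodic (vertexCount v x) (2 * n) := fun j ↦ by
  ext p; rw [vertexCount, h.antiperiodic.periodic_two_mul, vertexCount]

lemma edgeCount_periodic : Function.Periodic (edgeCount n v x) (2 * n) := fun j ↦ by
  ext p; rw [edgeCount, h.openEdge_periodic, edgeCount]

lemma edgePairCount_periodic : Function.Periodic (edgePairCount n v x) n := fun j ↦ by
  ext p
  rw [edgePairCount, add_assoc j n n, ← two_mul, h.edgeCount_periodic, add_comm, edgePairCount]

lemma exists_vertexCount_pos {i : ℤ} {p : ℝ × ℝ} (hi : 0 < vertexPairCount n v x i p) :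
    ∃ j, 0 < vertexCount v x j p ∧ edgePairCount n v x j p = edgePairCount n v x i p ∧
      edgePairCount n v x (j + 1) p = edgePairCount n v x (i + 1) p := by
  obtain hi | hi := Nat.add_pos_iff_pos_or_pos.1 hi
  · exact ⟨i, hi, rfl, rfl⟩
  · exact ⟨i + n, hi, by rw [h.edgePairCount_periodic],
      by rw [add_right_comm, h.edgePairCount_periodic]⟩

include ht

lemma finite_sub_mem {T : Set (ℝ × ℝ)} (hT : T ⊆ closedPolygon v) (p : ℝ × ℝ) :
    {i | p - x i ∈ T}.Finite :=
  _root_.finite_sub_mem ht.1 (h.isBounded_closedPolygon.subset hT) p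

lemma translateCount_halfOpen (i : ℤ) (p : ℝ × ℝ) : translateCount x (arcPolygon n v i n) p = k :=
  ht.translateCount_eq h.isBounded_closedPolygon (h.arcPolygon_subset_closedPolygon i n)
    (fun _ hy ↦ (h.eventually_mem_openPolygon hy).mono fun _ hr ↦ h.openPolygon_subset_interior hr)
    (fun _ hy ↦ h.eventually_notMem_closedPolygon hy) p

lemma translateCount_arcPolygon_succ (i : ℤ) {m : ℤ} (hm0 : 0 ≤ m) (hmn : m < n) (p : ℝ × ℝ) :
    translateCount x (arcPolygon n v i (m + 1)) p = translateCount x (arcPolygon n v i m) p +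
      translateCount x (arcPolygon n v i (m + 1) ∩ {y | slack v (i + m) y = 0}) p := by
  have hfin := fun m ↦ h.finite_sub_mem ht (h.arcPolygon_subset_closedPolygon i m) p
  conv_lhs => rw [h.arcPolygon_succ i hm0]
  exact translateCount_union
    ((h.disjoint_arcPolygon_line i hmn).mono_right Set.inter_subset_right) (hfin m)
    (h.finite_sub_mem ht
      (Set.inter_subset_left.trans (h.arcPolygon_subset_closedPolygon i (m + 1))) p)

lemma translateCount_arcPolygon (i : ℤ) {m : ℕ} (hm : (m : ℤ) < n) (p : ℝ × ℝ) :
    translateCount x (arcPolygon n v i (m + 1)) p = interiorCount v x p +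
      ∑ t ∈ Finset.range (m + 1), edgeCount n v x (i + t) p +
      ∑ t ∈ Finset.range m, vertexCount v x (i + t + 1) p := by
  induction m with
  | zero =>
    rw [Nat.cast_zero, h.translateCount_arcPolygon_succ ht i le_rfl (by exact_mod_cast hm),
      h.arcPolygon_one_inter_line, h.arcPolygon_zero]
    simp [interiorCount, edgeCount]
  | succ m ih =>
    have hline : translateCount x
        (arcPolygon n v i ((m + 1 : ℕ) + 1) ∩ {y | slack v (i + (m + 1 : ℕ)) y = 0}) p =
        edgeCount n v x (i + (m + 1 : ℕ)) p + vertexCount v x (i + (m + 1 : ℕ)) p := by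
      rw [h.arcPolygon_succ_inter_line i (by positivity) hm]
      exact translateCount_union (h.disjoint_openEdge_vertex _)
        (h.finite_sub_mem ht (h.openEdge_subset_closedPolygon _) p)
        (h.finite_sub_mem ht (Set.singleton_subset_iff.2 (h.vertex_mem_closedPolygon _)) p)
    rw [h.translateCount_arcPolygon_succ ht i (by positivity) hm, hline, Nat.cast_add_one,
      ih (by push_cast at hm; linarith), Finset.sum_range_succ _ (m + 1),
      Finset.sum_range_succ (fun t : ℕ ↦ vertexCount v x (i + t + 1) p) m, Nat.cast_add_one,
      ← add_assoc i]
    ring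

lemma eq_interiorCount_add {m : ℕ} (hm : (m : ℤ) + 1 = n) (i : ℤ) (p : ℝ × ℝ) :
    k = interiorCount v x p + ∑ t ∈ Finset.range (m + 1), edgeCount n v x (i + t) p +
      ∑ t ∈ Finset.range m, vertexCount v x (i + t + 1) p := by
  rw [← h.translateCount_arcPolygon ht i (by linarith), hm, h.translateCount_halfOpen ht]

lemma edgeCount_add_vertexCount_succ (i : ℤ) (p : ℝ × ℝ) :
    edgeCount n v x i p + vertexCount v x (i + 1) p =
      edgeCount n v x (i + n) p + vertexCount v x (i + n) p := by
  obtain ⟨m, hm⟩ := Int.eq_ofNat_of_zero_le (a := n - 1) (by linarith [h.two_le])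
  have hn : i + n = i + 1 + m := by linarith
  have hi := h.eq_interiorCount_add ht (m := m) (by linarith) i p
  have hi' := h.eq_interiorCount_add ht (m := m) (by linarith) (i + 1) p
  have hshift (t : ℕ) : i + (t + 1 : ℕ) = i + 1 + t := by push_cast; ring
  have hV := (Finset.sum_range_succ (fun t : ℕ ↦ vertexCount v x (i + 1 + t) p) m).symm.trans
    (Finset.sum_range_succ' _ m)
  rw [Finset.sum_range_succ'] at hi
  rw [Finset.sum_range_succ] at hi'
  simp only [hshift, Nat.cast_zero, add_zero, add_right_comm i _ (1 : ℤ), ← hn] at hi hi' hV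
  simp only [Nat.cast_add_one, ← add_assoc] at hV
  lia

lemma edgeCount_add_vertexCount (i : ℤ) (p : ℝ × ℝ) :
    edgeCount n v x i p + vertexCount v x i p =
      edgeCount n v x (i + n) p + vertexCount v x (i + n + 1) p := by
  have hi := h.edgeCount_add_vertexCount_succ ht (i + n) p
  rw [add_assoc i n n, ← two_mul, h.edgeCount_periodic, h.vertexCount_periodic] at hi
  exact hi.symm

lemma vertexCount_succ_eq {i : ℤ} {p : ℝ × ℝ} (hi : edgePairCount n v x i p = 0) :
    vertexCount v x (i + 1) p = vertexCount v x (i + n) p := by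
  have := h.edgeCount_add_vertexCount_succ ht i p
  rw [edgePairCount] at hi
  lia

lemma vertexCount_eq {i : ℤ} {p : ℝ × ℝ} (hi : edgePairCount n v x i p = 0) :
    vertexCount v x i p = vertexCount v x (i + n + 1) p := by
  have := h.edgeCount_add_vertexCount ht i p
  rw [edgePairCount] at hi
  lia

lemma vertexCount_add_two {i : ℤ} {p : ℝ × ℝ} (hi : edgePairCount n v x i p = 0)
    (hi' : edgePairCount n v x (i + 1) p = 0) :
    vertexCount v x (i + 2) p = vertexCount v x i p := by
  rw [h.vertexCount_eq ht hi, add_right_comm, ← h.vertexCount_succ_eq ht hi', add_assoc,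
    one_add_one_eq_two]

lemma vertexPairCount_eq (i j : ℤ) (p : ℝ × ℝ) :
    vertexPairCount n v x i p = vertexPairCount n v x j p := by
  have hper : Function.Periodic (fun j ↦ vertexPairCount n v x j p) 1 := fun j ↦ by
    have := h.edgeCount_add_vertexCount_succ ht j p
    have := h.edgeCount_add_vertexCount ht j p
    simp only [vertexPairCount, add_right_comm j 1 n]
    lia
  simpa using (hper.int_mul_eq i).trans (hper.int_mul_eq j).symm

lemma two_mul_eq_interiorCount_add {m : ℕ} (hm : (m : ℤ) + 1 = n) (i : ℤ) (p : ℝ × ℝ) :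
    2 * k = 2 * interiorCount v x p + ∑ t ∈ Finset.range (m + 1), edgePairCount n v x (i + t) p +
      m * vertexPairCount n v x i p := by
  have hN : ∑ t ∈ Finset.range m, vertexPairCount n v x (i + t + 1) p =
      m * vertexPairCount n v x i p := by
    simp [h.vertexPairCount_eq ht _ i]
  have hi := h.eq_interiorCount_add ht hm i p
  have hi' := h.eq_interiorCount_add ht hm (i + n) p
  simp only [add_right_comm i n] at hi'
  rw [← hN]
  simp only [edgePairCount, vertexPairCount, Finset.sum_add_distrib, add_right_comm _ (1 : ℤ) n]
  linarith

lemma le_interiorCount_add (hn : 3 ≤ n) {j : ℤ} {p q : ℝ × ℝ}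
    (hpq : q + edge v j = p) :
    k ≤ interiorCount v x p + edgeCount n v x j p + vertexCount v x (j + 1) p +
      interiorCount v x q := by
  have hopen := h.openPolygon_subset_interior.trans interior_subset
  have hsub : arcPolygon n v j n ⊆ openPolygon v ∪ openEdge n v j ∪ {v (j + 1)} ∪
      (· + -edge v j) ⁻¹' openPolygon v := fun y hy ↦ by
    simpa only [Set.mem_union, Set.mem_singleton_iff, Set.mem_preimage, or_assoc,
      sub_eq_add_neg] using h.mem_of_mem_arcPolygon hn hy
  rw [← h.translateCount_halfOpen ht j p, eq_add_neg_of_add_eq hpq]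
  refine (translateCount_mono hsub ?_).trans ?_
  · have hfin : {i | p - x i ∈ (· + -edge v j) ⁻¹' openPolygon v}.Finite := by
      simpa only [Set.mem_preimage, sub_add_eq_add_sub] using h.finite_sub_mem ht hopen _
    exact (((h.finite_sub_mem ht hopen p).union
      (h.finite_sub_mem ht (h.openEdge_subset_closedPolygon j) p)).union
      (h.finite_sub_mem ht (Set.singleton_subset_iff.2 (h.vertex_mem_closedPolygon _)) p)).union
      hfin
  · rw [interiorCount, interiorCount, ← translateCount_preimage_add_right]
    refine (translateCount_union_le ..).trans (Nat.add_le_add_right ?_ _)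
    refine (translateCount_union_le ..).trans (Nat.add_le_add_right ?_ _)
    exact translateCount_union_le ..

lemma le_interiorCount_add_vertexCount_add (hn : 3 ≤ n) {i : ℤ} {p : ℝ × ℝ}
    (hi : edgePairCount n v x i p = 0) :
    k ≤ interiorCount v x p + vertexCount v x i p + interiorCount v x (p + edge v i) := by
  have hpush := h.le_interiorCount_add ht hn (j := i + n) (p := p) (q := p + edge v i)
    (by rw [h.edge_antiperiodic, add_neg_cancel_right])
  rw [edgePairCount] at hi
  rwa [← h.vertexCount_eq ht hi, (Nat.add_eq_zero_iff.1 hi).2, add_zero] at hpush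

lemma card_le_interiorCount {Z : Finset (ℝ × ℝ)} {p : ℝ × ℝ} (hZ : ↑Z ⊆ openPolygon v)
    (hx : ∀ z ∈ Z, ∃ i, p - x i = z) : Z.card ≤ interiorCount v x p := by
  have hfin := h.finite_sub_mem ht (h.openPolygon_subset_interior.trans interior_subset) p
  calc Z.card ≤ ((fun i ↦ p - x i) '' {i | p - x i ∈ openPolygon v}).ncard := by
        rw [← Set.ncard_coe_finset]
        refine Set.ncard_le_ncard (fun z hz ↦ ?_) (hfin.image _)
        obtain ⟨i, rfl⟩ := hx z hz
        exact ⟨i, hZ hz, rfl⟩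
    _ ≤ interiorCount v x p := Set.ncard_image_le hfin

end IsSymmPolygon

end Counting

section Decagon

lemma exists_card_eq_three_of_odd_cycle {α : Type*} {w : ℕ → α} (hw : ∀ t, w (t + 1) ≠ w t) {m : ℕ}
    (hm : w (2 * m + 1) = w 0) : ∃ Z : Finset α, Z.card = 3 ∧ ↑Z ⊆ Set.range w := by
  classical
  by_contra! hZ
  have htwo : ∀ t, w (t + 2) = w t := fun t ↦ by
    by_contra ht
    refine hZ {w t, w (t + 1), w (t + 2)}
      (Finset.card_eq_three.2 ⟨_, _, _, (hw t).symm, Ne.symm ht, (hw (t + 1)).symm, rfl⟩) ?_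
    simp [Set.insert_subset_iff]
  have heven : ∀ m, w (2 * m) = w 0 := fun m ↦ by
    induction m with
    | zero => rfl
    | succ m ih => rw [mul_add_one, htwo, ih]
  exact hw (2 * m) (hm.trans (heven m).symm)

/-- The vertex `v (i + 3)` moved back along the edge `i`: when the endpoint of the `i`-th edge of
one tile is the vertex `i + 3` of another, the starting point of that edge has this position in
the other tile. -/
def innerVertex (v : ℤ → ℝ × ℝ) (i : ℤ) : ℝ × ℝ := v (i + 3) - edge v i

namespace IsSymmPolygon

variable {ι : Type} {v : ℤ → ℝ × ℝ} {x : ι → ℝ × ℝ} {k : ℕ} (h : IsSymmPolygon 5 v)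
include h

lemma innerVertex_mem_openPolygon (i : ℤ) : innerVertex v i ∈ openPolygon v :=
  h.vertex_sub_edge_mem_openPolygon (by norm_num) (by linarith) (by linarith)

lemma innerVertex_periodic : Function.Periodic (innerVertex v) (2 * 5) := fun i ↦ by
  rw [innerVertex, add_right_comm, h.antiperiodic.periodic_two_mul,
    h.edge_antiperiodic.periodic_two_mul, innerVertex]

lemma innerVertex_add_six_ne (i : ℤ) : innerVertex v (i + 6) ≠ innerVertex v i := fun he ↦ by
  have hv := h.antiperiodic (i + 4)
  have hv' := h.antiperiodic i
  have hedge := h.edge_antiperiodic (i + 1)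
  have hsub : edge v (i + 2) - edge v (i + 4) = 0 := by
    rw [← sub_eq_zero.2 he.symm]
    simp only [innerVertex, edge, add_assoc, Int.reduceAdd] at hv hv' hedge ⊢
    linear_combination (norm := module) hv - hv' - hedge
  have hpos := h.wedge_edge_pos (j := i + 2) (l := i + 4) (by linarith) (by linarith)
  rw [sub_eq_zero.1 hsub, wedge_self] at hpos
  exact hpos.false

variable (ht : IsKFoldTranslativeTiling (closedPolygon v) x k)
include ht

lemma vertexCount_add_six {i : ℤ} {p : ℝ × ℝ} (hi : edgePairCount 5 v x i p = 0) :
    vertexCount v x (i + 6) p = vertexCount v x i p := by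
  rw [h.vertexCount_eq ht hi, add_assoc]
  rfl

lemma interiorCount_add_two_mul_le (i : ℤ) (p : ℝ × ℝ) :
    interiorCount v x p + 2 * vertexPairCount 5 v x i p ≤ k := by
  have := h.two_mul_eq_interiorCount_add ht (m := 4) (by norm_num) i p
  lia

lemma edgePairCount_eq_zero {i : ℤ} {p : ℝ × ℝ}
    (hk : interiorCount v x p + 2 * vertexPairCount 5 v x i p = k) (j : ℤ) :
    edgePairCount 5 v x j p = 0 := by
  have hj := h.two_mul_eq_interiorCount_add ht (m := 4) (by norm_num) j p
  rw [h.vertexPairCount_eq ht j i, Finset.sum_range_succ', Nat.cast_zero, add_zero] at hj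
  lia

lemma interiorCount_add_two_le {i : ℤ} {p : ℝ × ℝ} (hi : 0 < vertexCount v x i p) :
    interiorCount v x p + 2 ≤ k := by
  have := h.interiorCount_add_two_mul_le ht i p
  rw [vertexPairCount] at this
  lia

lemma interiorCount_add_edge_add_two_le {i : ℤ} {p : ℝ × ℝ} (hi : 0 < vertexCount v x i p) :
    interiorCount v x (p + edge v i) + 2 ≤ k :=
  h.interiorCount_add_two_le ht (i := i + 1) (by rwa [vertexCount_succ_add_edge])

lemma vertexPairCount_le_one (hk : k ≤ 4) (i : ℤ) (p : ℝ × ℝ) :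
    vertexPairCount 5 v x i p ≤ 1 := by
  by_contra! hN
  obtain ⟨j, hj, -⟩ := h.exists_vertexCount_pos (one_pos.trans hN)
  rw [h.vertexPairCount_eq ht i j] at hN
  have hp := h.interiorCount_add_two_mul_le ht j p
  have hpush := h.le_interiorCount_add_vertexCount_add ht (by norm_num)
    (h.edgePairCount_eq_zero ht (i := j) (p := p) (by lia) j)
  have hq := h.interiorCount_add_two_mul_le ht (j + 1) (p + edge v j)
  rw [vertexPairCount, vertexCount_succ_add_edge] at hq
  lia

lemma vertexPairCount_eq_one (hk : k ≤ 4) {i : ℤ} {p : ℝ × ℝ} (hi : 0 < vertexCount v x i p) :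
    vertexPairCount 5 v x i p = 1 :=
  (h.vertexPairCount_le_one ht hk i p).antisymm (Nat.add_pos_left hi _)

lemma le_interiorCount_add_one_add (hk : k ≤ 4) {i : ℤ} {p : ℝ × ℝ}
    (hB : edgePairCount 5 v x i p = 0) :
    k ≤ interiorCount v x p + 1 + interiorCount v x (p + edge v i) := by
  have hpush := h.le_interiorCount_add_vertexCount_add ht (by norm_num) hB
  have hN := h.vertexPairCount_le_one ht hk i p
  rw [vertexPairCount] at hN
  lia

lemma exists_sub_eq_innerVertex (hk : k ≤ 4) {i : ℤ} {p : ℝ × ℝ} (hi : 0 < vertexCount v x i p)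
    (hf : interiorCount v x (p + edge v i) + 2 = k) : ∃ j, p - x j = innerVertex v i := by
  have hi' : 0 < vertexCount v x (i + 1) (p + edge v i) := by rwa [vertexCount_succ_add_edge]
  have hB := h.edgePairCount_eq_zero ht (i := i + 1) (p := p + edge v i)
    (by rw [h.vertexPairCount_eq_one ht hk hi', ← hf])
  rw [← h.vertexCount_add_two ht (hB (i + 1)) (hB _)] at hi'
  obtain ⟨j, hj⟩ := exists_sub_eq_vertex _ _ hi'
  refine ⟨j, ?_⟩
  rw [innerVertex, eq_sub_iff_add_eq, ← add_sub_right_comm, hj, add_assoc]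
  rfl

lemma interiorCount_pos (hk : k ≤ 4) {i : ℤ} {p : ℝ × ℝ} (hi : 0 < vertexCount v x i p)
    (hB : edgePairCount 5 v x i p = 0) : 0 < interiorCount v x p := by
  have hle := h.le_interiorCount_add_one_add ht hk hB
  have hq := h.interiorCount_add_edge_add_two_le ht hi
  lia

lemma interiorCount_add_two_eq_of_edgePairCount_eq_zero (hk : k ≤ 4) {i : ℤ} {p : ℝ × ℝ}
    (hi : 0 < vertexCount v x i p) (hB : edgePairCount 5 v x i p = 0)
    (hB' : edgePairCount 5 v x (i + 1) p = 0) : interiorCount v x p + 2 = k := by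
  classical
  by_contra hne
  have hp := h.interiorCount_add_two_le ht hi
  have hinner : ∀ j, 0 < vertexCount v x j p → edgePairCount 5 v x j p = 0 →
      ∃ l, p - x l = innerVertex v j := fun j hj hBj ↦ by
    refine h.exists_sub_eq_innerVertex ht hk hj ?_
    have hle := h.le_interiorCount_add_one_add ht hk hBj
    have hq := h.interiorCount_add_edge_add_two_le ht hj
    lia
  have hi6 : 0 < vertexCount v x (i + 6) p := by rwa [h.vertexCount_add_six ht hB]
  have hB6 : edgePairCount 5 v x (i + 6) p = 0 := by
    rwa [show i + 6 = i + 1 + 5 by ring, h.edgePairCount_periodic]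
  have htwo := h.card_le_interiorCount ht (Z := {innerVertex v (i + 6), innerVertex v i}) (p := p)
    (by simp [Set.insert_subset_iff, h.innerVertex_mem_openPolygon])
    (by simpa using ⟨hinner _ hi6 hB6, hinner _ hi hB⟩)
  rw [Finset.card_pair (h.innerVertex_add_six_ne i)] at htwo
  lia

lemma interiorCount_add_two_eq (hk : k ≤ 4) {i : ℤ} {p : ℝ × ℝ} (hi : 0 < vertexCount v x i p) :
    interiorCount v x p + 2 = k := by
  by_contra hne
  have hp := h.interiorCount_add_two_le ht hi
  have hN := h.vertexPairCount_eq_one ht hk hi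
  have hsum := h.two_mul_eq_interiorCount_add ht (m := 4) (by norm_num) i p
  have hzero : ∀ j, edgePairCount 5 v x j p = 0 →
      0 < interiorCount v x p ∧ edgePairCount 5 v x (j + 1) p ≠ 0 := fun j hj ↦ by
    obtain ⟨l, hl, hB, hB'⟩ := h.exists_vertexCount_pos (n := 5) (v := v) (x := x) (i := j) (p := p)
      (by rw [h.vertexPairCount_eq ht j i, hN]; exact one_pos)
    rw [hj] at hB
    refine ⟨h.interiorCount_pos ht hk hl hB, fun hj' ↦ hne ?_⟩
    exact h.interiorCount_add_two_eq_of_edgePairCount_eq_zero ht hk hl hB (hB'.trans hj')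
  have h0 := hzero i
  have h1 := hzero (i + 1)
  have h2 := hzero (i + 2)
  have h3 := hzero (i + 3)
  have h4 := hzero (i + 4)
  have h5 := congrFun (h.edgePairCount_periodic (x := x) i) p
  simp only [Finset.sum_range_succ, Finset.sum_range_zero, hN, Nat.cast_zero, Nat.cast_one,
    Nat.cast_ofNat, add_assoc, Int.reduceAdd, add_zero] at h1 h2 h3 h4 hsum
  lia

lemma vertexCount_pos_add_six_mul (hk : k ≤ 4) {i : ℤ} {p : ℝ × ℝ}
    (hi : 0 < vertexCount v x i p) (t : ℕ) : 0 < vertexCount v x (i + 6 * t) p := by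
  have hB := h.edgePairCount_eq_zero ht (i := i) (p := p)
    (by rw [h.vertexPairCount_eq_one ht hk hi, h.interiorCount_add_two_eq ht hk hi])
  induction t with
  | zero => simpa using hi
  | succ t ih =>
    rwa [Nat.cast_add_one, mul_add_one, ← add_assoc, h.vertexCount_add_six ht (hB _)]

lemma five_le (hk : 0 < k) : 5 ≤ k := by
  by_contra! hlt
  replace hlt : k ≤ 4 := by lia
  obtain ⟨p, hp⟩ : ∃ p, 0 < vertexCount v x 0 p := by
    obtain ⟨s, hs, -⟩ := ht.2.1 0
    obtain ⟨i, -⟩ := Finset.card_pos.1 (hk.trans_le hs)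
    refine ⟨v 0 + x i, (Set.ncard_pos ?_).2 ⟨i, by simp⟩⟩
    exact h.finite_sub_mem ht (Set.singleton_subset_iff.2 (h.vertex_mem_closedPolygon 0)) _
  have hinner (t : ℕ) : ∃ j, p - x j = innerVertex v (6 * t) := by
    have ht' := h.vertexCount_pos_add_six_mul ht hlt hp t
    rw [zero_add] at ht'
    exact h.exists_sub_eq_innerVertex ht hlt ht' <|
      h.interiorCount_add_two_eq ht hlt (i := 6 * t + 1) (by rwa [vertexCount_succ_add_edge])
  obtain ⟨Z, hZ, hZsub⟩ := exists_card_eq_three_of_odd_cycle (m := 2)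
    (w := fun t : ℕ ↦ innerVertex v (6 * t))
    (fun t ↦ by simpa [mul_add] using h.innerVertex_add_six_ne (6 * t))
    (by simpa using h.innerVertex_periodic.nat_mul 3 0)
  have hcard := h.card_le_interiorCount ht (Z := Z) (p := p)
    (hZsub.trans (Set.range_subset_iff.2 fun _ ↦ h.innerVertex_mem_openPolygon _))
    fun z hz ↦ by obtain ⟨t, rfl⟩ := hZsub hz; exact hinner t
  have := h.interiorCount_add_two_eq ht hlt hp
  lia

end IsSymmPolygon

end Decagon

lemma exists_strictMono_comp_fin {α β : Type*} [LinearOrder β] {U : Finset α} {f : α → β}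
    (hf : Set.InjOn f U) {n : ℕ} (hn : U.card = n) :
    ∃ w : Fin n → α, Set.range w = U ∧ StrictMono (f ∘ w) := by
  classical
  have hcard : (U.image f).card = n := by rw [Finset.card_image_of_injOn hf, hn]
  have hmem (s : Fin n) : ∃ a ∈ U, f a = (U.image f).orderEmbOfFin hcard s :=
    Finset.mem_image.1 ((U.image f).orderEmbOfFin_mem hcard s)
  choose w hwU hw using hmem
  refine ⟨w, (Set.range_subset_iff.2 hwU).antisymm fun a ha ↦ ?_, fun s t hst ↦ ?_⟩
  · obtain ⟨s, hs⟩ : f a ∈ Set.range ((U.image f).orderEmbOfFin hcard) := by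
      rw [Finset.range_orderEmbOfFin]
      exact Finset.mem_image_of_mem f ha
    exact ⟨s, hf (hwU s) ha ((hw s).trans hs)⟩
  · simpa only [Function.comp_apply, hw] using ((U.image f).orderEmbOfFin hcard).strictMono hst

lemma exists_antiperiodic_extension {E : Type*} [AddCommGroup E] {n : ℕ} (hn : 0 < n)
    (w : Fin n → E) :
    ∃ v : ℤ → E, Function.Antiperiodic v (n : ℤ) ∧ ∀ j : Fin n, v (j : ℤ) = w j := by
  have hn' : (0 : ℤ) < n := mod_cast hn
  have hmod (j : ℤ) : (j % n).toNat < n := by have := Int.emod_lt_of_pos j hn'; lia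
  refine ⟨fun j ↦ (j / n).negOnePow • w ⟨(j % n).toNat, hmod j⟩, fun j ↦ ?_, fun j ↦ ?_⟩
  · simp [Int.add_ediv_of_dvd_right, Int.ediv_self hn'.ne', Int.negOnePow_succ]
  · have hj : ((j : ℕ) : ℤ) < n := mod_cast j.2
    simp [Int.ediv_eq_zero_of_lt (Int.natCast_nonneg _) hj,
      Int.emod_eq_of_lt (Int.natCast_nonneg _) hj]

lemma range_subset_of_antiperiodic {E : Type*} [InvolutiveNeg E] {v : ℤ → E} {n : ℤ} (hn : 0 < n)
    (hv : Function.Antiperiodic v n) {S : Set E} (hneg : ∀ y ∈ S, -y ∈ S)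
    (hS : ∀ j, 0 ≤ j → j < n → v j ∈ S) : Set.range v ⊆ S := by
  rintro _ ⟨j, rfl⟩
  obtain ⟨m, ⟨hm0, hm⟩, e⟩ := hv.periodic_two_mul.exists_mem_Ico₀ (by lia) j
  rw [e]
  obtain hlt | hle := lt_or_ge m n
  · exact hS m hm0 hlt
  · rw [← sub_add_cancel m n, hv]
    exact hneg _ (hS _ (by lia) (by lia))

lemma wedge_pos_of_antiperiodic {v : ℤ → ℝ × ℝ} {n : ℤ} (hn : 0 < n)
    (hv : Function.Antiperiodic v n)
    (hpos : ∀ j l, 0 ≤ j → j < l → l < n → 0 < wedge (v j) (v l)) (j l : ℤ) (hjl : j < l)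
    (hl : l < j + n) : 0 < wedge (v j) (v l) := by
  have hper : Function.Periodic (fun i ↦ wedge (v i) (v (i + (l - j)))) n := fun i ↦ by
    simp only [add_right_comm i n, hv _, map_neg, LinearMap.neg_apply, neg_neg]
  obtain ⟨m, ⟨hm0, hm⟩, e⟩ := hper.exists_mem_Ico₀ hn j
  simp only [add_sub_cancel] at e
  rw [e]
  obtain hlt | hle := lt_or_ge (m + (l - j)) n
  · exact hpos _ _ hm0 (by lia) hlt
  · rw [← sub_add_cancel (m + (l - j)) n, hv, map_neg, neg_wedge]
    exact hpos _ _ (by lia) (by lia) hm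

section ConvexIndependent

variable {E : Type*} [AddCommGroup E] [Module ℝ E] {W : Finset E}

lemma zero_mem_convexHull_sdiff_singleton (hneg : ∀ w ∈ W, -w ∈ W) (hcard : 2 < W.card) (w : E) :
    (0 : E) ∈ convexHull ℝ ((W : Set E) \ {w}) := by
  classical
  obtain ⟨u, hu, hne⟩ := Finset.exists_mem_ne
    (show 1 < (W.erase w).card by have := Finset.pred_card_le_card_erase (s := W) (a := w); lia)
    (-w)
  obtain ⟨huw, hu⟩ := Finset.mem_erase.1 hu
  have := convex_convexHull ℝ ((W : Set E) \ {w}) (subset_convexHull ℝ _ ⟨hu, huw⟩)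
    (subset_convexHull ℝ _ ⟨hneg u hu, fun e ↦ hne (eq_neg_of_add_eq_zero_left (by
      rw [← show -u = w from e, add_neg_cancel]))⟩)
    (a := 1 / 2) (b := 1 / 2) (by norm_num) (by norm_num) (by norm_num)
  rwa [smul_neg, add_neg_cancel] at this

variable (hW : ConvexIndependent ℝ ((↑) : W → E)) (hneg : ∀ w ∈ W, -w ∈ W) (hcard : 2 < W.card)
include hW hneg hcard

lemma smul_add_smul_ne {a b c : E} (ha : a ∈ W) (hb : b ∈ W) (hc : c ∈ W) (hab : a ≠ b)
    (hcb : c ≠ b) {s t : ℝ} (hs : 0 ≤ s) (ht : 0 ≤ t) (hst : s + t ≤ 1) : s • a + t • c ≠ b := by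
  rintro rfl
  exact convexIndependent_set_iff_notMem_convexHull_sdiff.1 hW _ hb <|
    smul_add_smul_mem_of_zero_mem (convex_convexHull ℝ _)
      (zero_mem_convexHull_sdiff_singleton hneg hcard _)
      (subset_convexHull ℝ _ ⟨ha, hab⟩) (subset_convexHull ℝ _ ⟨hc, hcb⟩) hs ht hst

lemma zero_notMem : (0 : E) ∉ W := fun h0 ↦
  convexIndependent_set_iff_notMem_convexHull_sdiff.1 hW _ h0
    (zero_mem_convexHull_sdiff_singleton hneg hcard _)

end ConvexIndependent

section AngularOrder

lemma exists_wedge_ne_zero {W : Finset (ℝ × ℝ)} (h0 : 0 ∉ W) :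
    ∃ t : ℝ, ∀ w ∈ W, wedge (1, t) w ≠ 0 := by
  classical
  obtain ⟨t, ht⟩ := Infinite.exists_notMem_finset (W.image fun w ↦ w.2 / w.1)
  refine ⟨t, fun w hw hz ↦ ?_⟩
  rw [wedge_apply, one_mul, sub_eq_zero] at hz
  by_cases h1 : w.1 = 0
  · rw [h1, mul_zero] at hz
    exact h0 ((Prod.ext h1 hz : w = 0) ▸ hw)
  · exact ht (Finset.mem_image.2 ⟨w, hw, by rw [hz, mul_div_cancel_right₀ _ h1]⟩)

lemma two_mul_card_filter_wedge_pos {W : Finset (ℝ × ℝ)} (hneg : ∀ w ∈ W, -w ∈ W) {d : ℝ × ℝ}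
    (hd : ∀ w ∈ W, wedge d w ≠ 0) : 2 * (W.filter (0 < wedge d ·)).card = W.card := by
  rw [two_mul, ← Finset.card_filter_add_card_filter_not (s := W) (0 < wedge d ·)]
  congr 1
  refine Finset.card_nbij' Neg.neg Neg.neg ?_ ?_ (fun _ _ ↦ neg_neg _)
    (fun _ _ ↦ neg_neg _) <;>
    simp only [Set.MapsTo, Finset.coe_filter, Set.mem_ofPred_eq, map_neg, neg_pos, not_lt]
  · exact fun w hw ↦ ⟨hneg w hw.1, by linarith [hw.2]⟩
  · exact fun w hw ↦ ⟨hneg w hw.1, hw.2.lt_of_ne (hd w hw.1)⟩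

variable {W : Finset (ℝ × ℝ)} (hW : ConvexIndependent ℝ ((↑) : W → ℝ × ℝ))
  (hneg : ∀ w ∈ W, -w ∈ W) (hcard : 2 < W.card)
include hW hneg hcard

lemma wedge_sub_sub_pos {a b c : ℝ × ℝ} (ha : a ∈ W) (hb : b ∈ W) (hc : c ∈ W)
    (hab : 0 < wedge a b) (hbc : 0 < wedge b c) (hac : 0 < wedge a c) :
    0 < wedge (b - a) (c - a) := by
  have hexp : wedge (b - a) (c - a) = wedge a b + wedge b c - wedge a c := by
    simp only [wedge_apply, Prod.fst_sub, Prod.snd_sub]; ring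
  by_contra hle
  refine smul_add_smul_ne hW hneg hcard ha hb hc ?_ ?_ (div_nonneg hbc.le hac.le)
    (div_nonneg hab.le hac.le) ?_ ?_
  · rintro rfl; simp at hab
  · rintro rfl; simp at hbc
  · rw [← add_div, div_le_one hac]; linarith
  · apply smul_right_injective _ hac.ne'
    simp only [smul_add, smul_smul, mul_div_cancel₀ _ hac.ne']
    exact (wedge_smul_eq a c b).symm

lemma eq_of_wedge_eq_zero {a b d : ℝ × ℝ} (ha : a ∈ W) (hb : b ∈ W) (hda : 0 < wedge d a)
    (hdb : 0 < wedge d b) (hab : wedge a b = 0) : a = b := by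
  wlog hle : wedge d a ≤ wedge d b generalizing a b
  · exact (this hb ha hdb hda (by rw [← neg_wedge, hab, neg_zero]) (le_of_not_ge hle)).symm
  by_contra hne
  refine smul_add_smul_ne hW hneg hcard hb ha hb (Ne.symm hne) (Ne.symm hne)
    (div_nonneg hda.le hdb.le) le_rfl (by rwa [add_zero, div_le_one hdb]) ?_
  apply smul_right_injective _ hdb.ne'
  simp only [zero_smul, add_zero, smul_smul, mul_div_cancel₀ _ hdb.ne']
  simpa [hab] using (wedge_smul_eq d b a).symm

lemma exists_fin_wedge_pos {d : ℝ × ℝ} (hd : d.1 = 1) {n : ℕ}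
    (hn : (W.filter (0 < wedge d ·)).card = n) :
    ∃ w : Fin n → ℝ × ℝ, Set.range w = W.filter (0 < wedge d ·) ∧
      ∀ i j, i < j → 0 < wedge (w i) (w j) := by
  -- On the half-plane to the left of `d`, this slope increases with the angle.
  let r (w : ℝ × ℝ) : ℝ := wedge (0, 1) w / wedge d w
  have hwedge {a b : ℝ × ℝ} (ha : 0 < wedge d a) (hb : 0 < wedge d b) :
      wedge a b = wedge d a * wedge d b * (r b - r a) := by
    have key := wedge_plucker d (0, 1) a b
    have he : wedge d (0, 1) = 1 := by simp [wedge_apply, hd]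
    simp only [r]
    field_simp
    rw [he] at key
    linear_combination -key
  have hinj : Set.InjOn r (W.filter (0 < wedge d ·) : Finset (ℝ × ℝ)) := fun a ha b hb hr ↦ by
    obtain ⟨ha, hda⟩ := Finset.mem_filter.1 ha
    obtain ⟨hb, hdb⟩ := Finset.mem_filter.1 hb
    exact eq_of_wedge_eq_zero hW hneg hcard ha hb hda hdb
      (by rw [hwedge hda hdb, hr, sub_self, mul_zero])
  obtain ⟨w, hw, hmono⟩ := exists_strictMono_comp_fin hinj hn
  have hpos (i : Fin n) : 0 < wedge d (w i) :=
    (Finset.mem_filter.1 (hw.subset (Set.mem_range_self i))).2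
  refine ⟨w, hw, fun i j hij ↦ ?_⟩
  rw [hwedge (hpos i) (hpos j)]
  exact mul_pos (mul_pos (hpos i) (hpos j)) (sub_pos.2 (hmono hij))

lemma exists_antiperiodic_wedge_pos {n : ℕ} (hn : W.card = 2 * n) :
    ∃ v : ℤ → ℝ × ℝ, Function.Antiperiodic v (n : ℤ) ∧ Set.range v = W ∧
      ∀ j l : ℤ, j < l → l < j + n → 0 < wedge (v j) (v l) := by
  obtain ⟨t, ht⟩ := exists_wedge_ne_zero (zero_notMem hW hneg hcard)
  have hU := two_mul_card_filter_wedge_pos hneg ht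
  obtain ⟨w, hw, hpos⟩ := exists_fin_wedge_pos hW hneg hcard (d := (1, t)) rfl
    (n := n) (by lia)
  obtain ⟨v, hv, hvw⟩ := exists_antiperiodic_extension (by lia) w
  have hvw' {j : ℤ} (hj0 : 0 ≤ j) (hjn : j < n) : v j = w ⟨j.toNat, by lia⟩ := by
    rw [← hvw, Int.toNat_of_nonneg hj0]
  refine ⟨v, hv, Set.Subset.antisymm ?_ fun y hy ↦ ?_,
    wedge_pos_of_antiperiodic (by lia) hv fun j l hj hjl hl ↦ ?_⟩
  · refine range_subset_of_antiperiodic (by lia) hv hneg fun j hj0 hjn ↦ ?_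
    rw [hvw' hj0 hjn]
    exact (Finset.mem_filter.1 (hw.subset (Set.mem_range_self _))).1
  · rcases (ht y hy).lt_or_gt with hlt | hgt
    · obtain ⟨i, hi⟩ := hw.superset (Finset.mem_filter.2 ⟨hneg y hy, by simpa using hlt⟩)
      exact ⟨i + n, by rw [hv, hvw, hi, neg_neg]⟩
    · obtain ⟨i, hi⟩ := hw.superset (Finset.mem_filter.2 ⟨hy, hgt⟩)
      exact ⟨i, by rw [hvw, hi]⟩
  · rw [hvw' hj (by lia), hvw' (by lia) hl]
    exact hpos _ _ (by simp; lia)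

lemma exists_isSymmPolygon {n : ℕ} (hn : W.card = 2 * n) :
    ∃ v, IsSymmPolygon n v ∧ Set.range v = W := by
  obtain ⟨v, hv, hrange, hpos⟩ := exists_antiperiodic_wedge_pos hW hneg hcard hn
  have hmem (j : ℤ) : v j ∈ W := hrange.subset (Set.mem_range_self j)
  refine ⟨v, ⟨by lia, hv, fun j l hjl hl ↦ ?_⟩, hrange⟩
  have hsucc : 0 < wedge (v j) (v (j + 1)) := hpos _ _ (by lia) (by lia)
  rcases lt_or_ge l (j + n) with hlt | hge
  · exact wedge_sub_sub_pos hW hneg hcard (hmem _) (hmem _) (hmem _) hsucc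
      (hpos _ _ hjl (by lia)) (hpos _ _ (by lia) hlt)
  have hopp (m : ℤ) : wedge (v (j + 1) - v j) (v (m + n) - v j) =
      wedge (v j) (v (j + 1)) + wedge (v m) (v (j + 1)) - wedge (v m) (v j) := by
    simp only [hv m, wedge_apply, Prod.fst_sub, Prod.snd_sub, Prod.fst_neg, Prod.snd_neg]; ring
  rw [slack, edge]
  obtain rfl | rfl | hl' : l = j + n ∨ l = j + 1 + n ∨ j + 1 + n < l := by lia
  · rw [hopp, wedge_self]
    linarith
  · rw [hopp, wedge_self, ← neg_wedge (v j)]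
    linarith
  · have htri := wedge_sub_sub_pos hW hneg hcard (hmem (l - 2 * n)) (hmem j) (hmem (j + 1))
      (hpos _ _ (by lia) (by lia)) hsucc (hpos _ _ (by lia) (by lia))
    rw [hv.periodic_two_mul.sub_eq] at htri
    simp only [wedge_apply, Prod.fst_sub, Prod.snd_sub] at htri ⊢
    linarith

end AngularOrder

section Centering

variable {P : Set (ℝ × ℝ)} {V : Finset (ℝ × ℝ)} {n : ℕ}

lemma exists_closedPolygon_eq_of_neg_mem (hP : P = convexHull ℝ V)
    (hext : ∀ w ∈ V, w ∈ P.extremePoints ℝ) (hneg : ∀ y ∈ P, -y ∈ P) (hn : 2 ≤ n)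
    (hV : V.card = 2 * n) : ∃ v, IsSymmPolygon n v ∧ closedPolygon v = P := by
  have hconv : Convex ℝ P := hP ▸ convex_convexHull ℝ _
  have hnegP : LinearEquiv.neg ℝ '' P = P := Set.Subset.antisymm (Set.image_subset_iff.2 hneg)
    fun y hy ↦ ⟨-y, hneg y hy, neg_neg y⟩
  have hnegV : ∀ w ∈ V, -w ∈ V := fun w hw ↦ by
    have := Set.mem_image_of_mem (LinearEquiv.neg ℝ) (hext w hw)
    rw [image_extremePoints, hnegP, hP] at this
    exact extremePoints_convexHull_subset this
  obtain ⟨v, hv, hrange⟩ := exists_isSymmPolygon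
    (hconv.convexIndependent_extremePoints.mono hext) hnegV (by lia) hV
  exact ⟨v, hv, by rw [hv.closedPolygon_eq_convexHull, hrange, hP]⟩

lemma sub_mem_extremePoints_preimage {E : Type*} [AddCommGroup E] [Module ℝ E]
    {K : Set E} {w : E} (hw : w ∈ K.extremePoints ℝ) (c : E) :
    w - c ∈ ((· + c) ⁻¹' K).extremePoints ℝ := by
  refine ⟨by simpa using hw.1, fun a ha b hb hab ↦ eq_sub_of_add_eq (hw.2 ha hb ?_)⟩
  rw [← openSegment_translate_preimage ℝ c] at hab
  simpa [add_comm _ c] using hab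

lemma IsConvexPolygon.exists_closedPolygon_eq (hP : IsConvexPolygon P V)
    (hsym : IsCentrallySymmetric P) (hn : 2 ≤ n) (hV : V.card = 2 * n) :
    ∃ c v, IsSymmPolygon n v ∧ closedPolygon v = (· + c) ⁻¹' P := by
  classical
  obtain ⟨hPV, hext, -⟩ := hP
  obtain ⟨c, hc⟩ := hsym
  refine ⟨c, exists_closedPolygon_eq_of_neg_mem (V := V.image (· - c)) ?_ ?_ ?_ hn ?_⟩
  · rw [Finset.coe_image, ← Set.sub_singleton, convexHull_sub, convexHull_singleton, ← hPV,
      sub_eq_add_neg, Set.neg_singleton, Set.add_singleton, Set.image_add_right']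
  · exact Finset.forall_mem_image.2 fun w hw ↦ sub_mem_extremePoints_preimage (hext w hw) c
  · intro y hy
    have := hc _ hy
    rwa [two_smul, add_sub_add_right_eq_sub, sub_eq_neg_add] at this
  · rw [Finset.card_image_of_injective _ sub_left_injective, hV]

end Centering

/-- If a centrally symmetric convex decagon (a convex polygon with exactly 10 vertices,
symmetric about a point) admits a `k`-fold translative tiling of the plane, then
`k ≥ 5`; that is, `τ(P) ≥ 5`. -/
theorem tau_decagon_ge (P : Set (ℝ × ℝ)) (V : Finset (ℝ × ℝ))
    (hP : IsConvexPolygon P V) (hV : V.card = 10) (hsym : IsCentrallySymmetric P)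
    (k : ℕ) (hk : 0 < k) (ι : Type) (x : ι → ℝ × ℝ)
    (htile : IsKFoldTranslativeTiling P x k) :
    5 ≤ k := by
  obtain ⟨c, v, hv, hvP⟩ := hP.exists_closedPolygon_eq hsym (n := 5) (by norm_num) hV
  exact hv.five_le (hvP ▸ htile.translate c) hk
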